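/- Let X be a complex separable infinite-dimensional Banach space and let T be a bounded linear operator on X. If the eigenvectors of T associated to eigenvalues of modulus 1 are perfectly spanning, then T is frequently hypercyclic. -/

import Mathlib

open MeasureTheory Filter Topology

open scoped Classical in
/-- Lower density of a set of natural numbers. -/
noncomputable def lowerDensity (A : Set ℕ) : ℝ :=
  Filter.atTop.liminf fun N : ℕ =>
    (((Finset.range N).filter (fun n => n ∈ A)).card : ℝ) / (N : ℝ)

/-- `x` is a frequently hypercyclic vector for `T`. -/
def FreqHCVector {X : Type*} [NormedAddCommGroup X] [NormedSpace ℂ X]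
    (T : X →L[ℂ] X) (x : X) : Prop :=
  ∀ U : Set X, IsOpen U → U.Nonempty → 0 < lowerDensity {n : ℕ | (T ^ n) x ∈ U}

/-- `T` is frequently hypercyclic. -/
def FrequentlyHypercyclic {X : Type*} [NormedAddCommGroup X] [NormedSpace ℂ X]
    (T : X →L[ℂ] X) : Prop :=
  ∃ x : X, FreqHCVector T x

/-- `T` is hypercyclic. -/
def Hypercyclic {X : Type*} [NormedAddCommGroup X] [NormedSpace ℂ X]
    (T : X →L[ℂ] X) : Prop :=
  ∃ x : X, Dense (Set.range fun n : ℕ => (T ^ n) x)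

/-- `T` has a perfectly spanning set of eigenvectors associated to unimodular
eigenvalues: there is a continuous (atomless) probability measure `σ` on the unit
circle such that whenever `A` is a measurable subset of the circle with `σ A = 1`,
the span of the eigenspaces `ker (T - c)`, `c ∈ A`, is dense in `X`. -/
def PerfectlySpanning {X : Type*} [NormedAddCommGroup X] [NormedSpace ℂ X]
    (T : X →L[ℂ] X) : Prop :=
  ∃ σ : Measure ℂ, IsProbabilityMeasure σ ∧ (∀ c : ℂ, σ {c} = 0) ∧
    σ {c : ℂ | ‖c‖ = 1} = 1 ∧
    ∀ A : Set ℂ, A ⊆ {c : ℂ | ‖c‖ = 1} → MeasurableSet A → σ A = 1 →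
      Dense (Submodule.span ℂ (⋃ c ∈ A, {x : X | T x = c • x}) : Set X)

/-!
A finite sum `z` of unimodular eigenvectors is almost periodic: it returns near itself along a set
of times that fills a fixed proportion of every interval `[0, N)`. Hence if an iterate of `z` lies
in an open set `U`, the orbit of every `x` visits `U` with positive lower density as soon as all
Cesàro means of `‖T ^ n (x - z)‖` are small. By a Baire category argument for the norm given by the
supremum of these means, it remains to perturb `z`, in that norm, so that its orbit meets `U`.

Perfect spanning and separability make the span dense already when one uses only eigenvectors `w`
that are limits of eigenvectors `x c` for infinitely many eigenvalues `c`. Averaging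
`c ^ (-m) • x c` over a large finite set `F` of such `c` gives a perturbation whose `n`-th iterate
is close to `a (n - m) • w`, where `a j` is the mean of `c ^ j` over `F`. If `m` is a return time
of `z`, the `m`-th iterate of the perturbed vector is therefore close to `z + w`. Since `‖a j‖ ^ 2`
has mean `1 / #F` over long intervals, a maximal inequality provides a return time `m` for which
all Cesàro means of `‖a (n - m)‖` are small. Sums of such `w` are reached one summand at a time.
-/

section Density

open scoped Classical in
/-- `S` contains at least `N / q` of the first `N` natural numbers, for every `N` and not only
asymptotically. -/
def HasInitialDensity (S : Set ℕ) (q : ℕ) : Prop :=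
  ∀ N : ℕ, N ≤ q * Nat.count (· ∈ S) N

lemma HasInitialDensity.pos {S : Set ℕ} {q : ℕ} (hS : HasInitialDensity S q) : 0 < q :=
  Nat.pos_of_mul_pos_right (Nat.lt_of_lt_of_le one_pos (hS 1))

lemma hasInitialDensity_of_finite_coloring {α : Type*} {φ : ℕ → α} {t : Finset α}
    (hφ : ∀ n, φ n ∈ t) {S : Set ℕ} (hS : ∀ m n, m ≤ n → φ m = φ n → n - m ∈ S) :
    HasInitialDensity S t.card := by
  classical
  intro N
  have card_fiber_le : ∀ u ∈ t, {n ∈ Finset.range N | φ n = u}.card ≤ Nat.count (· ∈ S) N := by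
    intro u _
    rcases Finset.eq_empty_or_nonempty {n ∈ Finset.range N | φ n = u} with hempty | hne
    · simp [hempty]
    obtain ⟨m, hm, hmin⟩ := Finset.exists_min_image _ id hne
    simp only [Finset.mem_filter, Finset.mem_range, id] at hm hmin
    rw [Nat.count_eq_card_filter_range]
    refine Finset.card_le_card_of_injOn (· - m) (fun n hn => ?_) fun n hn n' hn' h => ?_
    · simp only [Finset.coe_filter, Finset.mem_range, Set.mem_ofPred_eq] at hn ⊢
      exact ⟨by omega, hS m n (hmin n hn) (hm.2.trans hn.2.symm)⟩
    · have := hmin n (by simpa using hn)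
      have := hmin n' (by simpa using hn')
      simp only at h
      omega
  calc N = (Finset.range N).card := (Finset.card_range N).symm
    _ ≤ Nat.count (· ∈ S) N * t.card :=
      Finset.card_le_mul_card_image_of_maps_to (fun n _ => hφ n) _ card_fiber_le
    _ = t.card * Nat.count (· ∈ S) N := mul_comm _ _

lemma exists_hasInitialDensity_of_totallyBounded {Y : Type*} [PseudoMetricSpace Y] {f : ℕ → Y}
    (hf : TotallyBounded (Set.range f)) {ε : ℝ} (hε : 0 < ε) {S : Set ℕ}
    (hS : ∀ m n, m ≤ n → dist (f m) (f n) < ε → n - m ∈ S) :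
    ∃ q, HasInitialDensity S q := by
  obtain ⟨t, -, ht, hcover⟩ := Metric.finite_approx_of_totallyBounded hf (ε / 2) (half_pos hε)
  have exists_center : ∀ n, ∃ u ∈ t, dist (f n) u < ε / 2 := fun n => by
    simpa using hcover (Set.mem_range_self n)
  choose φ hφt hφ using exists_center
  refine ⟨_, hasInitialDensity_of_finite_coloring (t := ht.toFinset) (by simpa using hφt)
    fun m n hmn hφmn => hS m n hmn ?_⟩
  calc dist (f m) (f n) ≤ dist (f m) (φ m) + dist (f n) (φ m) := dist_triangle_right _ _ _
    _ < ε / 2 + ε / 2 := add_lt_add (hφ m) (hφmn ▸ hφ n)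
    _ = ε := add_halves ε

lemma isCoboundedUnder_ge_count_div (A : Set ℕ) [DecidablePred (· ∈ A)] :
    IsCoboundedUnder (· ≥ ·) atTop
      fun N : ℕ => (((Finset.range N).filter (fun n => n ∈ A)).card : ℝ) / (N : ℝ) := by
  refine IsBoundedUnder.isCoboundedUnder_ge ⟨1, eventually_map.2 (Eventually.of_forall fun N => ?_)⟩
  refine div_le_one_of_le₀ ?_ N.cast_nonneg
  exact_mod_cast (Finset.card_filter_le _ _).trans (Finset.card_range N).le

open scoped Classical in
lemma lowerDensity_mono {A B : Set ℕ} (hAB : A ⊆ B) : lowerDensity A ≤ lowerDensity B := by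
  refine liminf_le_liminf (Eventually.of_forall fun N => by gcongr) ?_
    (isCoboundedUnder_ge_count_div B)
  exact ⟨0, eventually_map.2 (Eventually.of_forall fun N => by positivity)⟩

open scoped Classical in
lemma le_lowerDensity_of_eventually_mul_le_count {A : Set ℕ} {a : ℝ}
    (h : ∀ᶠ N : ℕ in atTop, a * N ≤ Nat.count (· ∈ A) N) : a ≤ lowerDensity A := by
  refine le_liminf_of_le (isCoboundedUnder_ge_count_div A) ?_
  filter_upwards [h, eventually_gt_atTop 0] with N hN hpos
  rwa [le_div_iff₀ (by exact_mod_cast hpos), ← Nat.count_eq_card_filter_range]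

open scoped Classical in
lemma HasInitialDensity.lowerDensity_pos_of_add_mem_union {P A Q : Set ℕ} {q : ℕ}
    (hP : HasInitialDensity P q) {m : ℕ} (hPAQ : ∀ n ∈ P, m + n ∈ A ∪ Q)
    (hQ : ∀ N : ℕ, 2 * q * Nat.count (· ∈ Q) N ≤ N) : 0 < lowerDensity A := by
  have count_P_le (N : ℕ) :
      Nat.count (· ∈ P) N ≤ Nat.count (· ∈ A) (m + N) + Nat.count (· ∈ Q) (m + N) := by
    calc Nat.count (· ∈ P) N ≤ Nat.count (fun n => m + n ∈ A ∪ Q) N :=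
          Nat.count_mono_left fun n _ => hPAQ n
      _ ≤ Nat.count (· ∈ A ∪ Q) (m + N) := by rw [Nat.count_add]; exact Nat.le_add_left _ _
      _ ≤ Nat.count (· ∈ A) (m + N) + Nat.count (· ∈ Q) (m + N) := by
        simp only [Nat.count_eq_card_filter_range, Set.mem_union, Finset.filter_or]
        exact Finset.card_union_le _ _
  have hq : (0 : ℝ) < q := by exact_mod_cast hP.pos
  refine lt_of_lt_of_le (by positivity : (0 : ℝ) < 1 / (4 * q))
    (le_lowerDensity_of_eventually_mul_le_count ?_)
  filter_upwards [eventually_ge_atTop (4 * m)] with N hN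
  obtain ⟨k, rfl⟩ := Nat.exists_eq_add_of_le (show m ≤ N by omega)
  have count_A_ge : m + k ≤ 4 * q * Nat.count (· ∈ A) (m + k) := by
    have := (hP k).trans (Nat.mul_le_mul_left q (count_P_le k))
    have := hQ (m + k)
    lia
  rw [div_mul_eq_mul_div, one_mul, div_le_iff₀ (by positivity), mul_comm]
  exact_mod_cast count_A_ge

end Density

section MaximalInequality

open scoped Classical in
/- Scanning the starting points `-m` from left to right and jumping over each chosen window makes
the windows disjoint, so no constant is lost. -/
lemma mul_count_le_sum_of_large_windows {g : ℤ → ℝ} (hg : ∀ j, 0 ≤ g j) {δ : ℝ} (hδ : 0 ≤ δ)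
    {M : ℕ} {S : Set ℕ} (hS : ∀ m ∈ S, ∃ N : ℕ, 0 < N ∧ N ≤ M ∧
      N * δ ≤ ∑ n ∈ Finset.range N, g (n - m)) (R : ℕ) :
    Nat.count (· ∈ S) R * δ ≤ ∑ n ∈ Finset.range (R + M), g (n + 1 - R) := by
  induction R using Nat.strong_induction_on with
  | _ R ih =>
  obtain _ | r := R
  · simpa using Finset.sum_nonneg fun (n : ℕ) _ => hg (n + 1)
  have window_start : ∀ n : ℕ, g (n + 1 - (r + 1 : ℕ)) = g (n - r) := fun n => by
    congr 1; push_cast; ring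
  simp only [window_start]
  by_cases hr : r ∈ S
  · obtain ⟨N, hN, hNM, hwindow⟩ := hS r hr
    rcases le_total N (r + 1) with hNr | hrN
    · obtain ⟨k, hk⟩ := Nat.exists_eq_add_of_le' hNr
      have count_le : (Nat.count (· ∈ S) (r + 1) : ℝ) ≤ N + Nat.count (· ∈ S) k := by
        rw [hk, Nat.count_add, add_comm]
        exact_mod_cast Nat.add_le_add_right (Nat.count_le _) _
      calc Nat.count (· ∈ S) (r + 1) * δ ≤ N * δ + Nat.count (· ∈ S) k * δ := by
            rw [← add_mul]; gcongr
        _ ≤ ∑ n ∈ Finset.range N, g (n - r) + ∑ n ∈ Finset.range (k + M), g (n + 1 - k) :=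
            add_le_add hwindow (ih k (by omega))
        _ = ∑ n ∈ Finset.range (r + 1 + M), g (n - r) := by
            rw [show r + 1 + M = N + (k + M) by omega, Finset.sum_range_add _ N]
            congr! 3
            lia
    · calc Nat.count (· ∈ S) (r + 1) * δ ≤ N * δ := by
            gcongr; exact (Nat.count_le _).trans hrN
        _ ≤ ∑ n ∈ Finset.range N, g (n - r) := hwindow
        _ ≤ ∑ n ∈ Finset.range (r + 1 + M), g (n - r) :=
            Finset.sum_le_sum_of_subset_of_nonneg (Finset.range_mono (by omega))
              fun n _ _ => hg _
  · calc Nat.count (· ∈ S) (r + 1) * δ = Nat.count (· ∈ S) r * δ := by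
          rw [Nat.count_succ_eq_count_iff.2 hr]
      _ ≤ ∑ n ∈ Finset.range (r + M), g (n + 1 - r) := ih r r.lt_succ_self
      _ ≤ ∑ n ∈ Finset.range (r + 1 + M), g (n - r) := by
          rw [Nat.add_right_comm, Finset.sum_range_succ']
          push_cast
          exact le_add_of_nonneg_right (hg _)

lemma HasInitialDensity.exists_mem_forall_sum_le {S : Set ℕ} {q : ℕ} (hS : HasInitialDensity S q)
    {g : ℤ → ℝ} (hg : ∀ j, 0 ≤ g j) {η C δ : ℝ} (hη : 0 ≤ η)
    (hmean : ∀ (a : ℤ) (N : ℕ), ∑ n ∈ Finset.range N, g (a + n) ≤ N * η + C)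
    (hδ : q * η < δ) :
    ∃ m ∈ S, ∀ N : ℕ, ∑ n ∈ Finset.range N, g (n - m) ≤ N * δ := by
  classical
  by_contra! hbad
  have hq : (1 : ℝ) ≤ q := by exact_mod_cast hS.pos
  have hηδ : η < δ := (le_mul_of_one_le_left hη hq).trans_lt hδ
  have window_le : ∀ m ∈ S, ∃ N : ℕ, 0 < N ∧ N ≤ ⌈C / (δ - η)⌉₊ ∧
      N * δ ≤ ∑ n ∈ Finset.range N, g (n - m) := by
    intro m hm
    obtain ⟨N, hN⟩ := hbad m hm
    refine ⟨N, Nat.pos_of_ne_zero fun h => by simp [h] at hN, ?_, hN.le⟩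
    have hNC := hmean (-m) N
    simp only [neg_add_eq_sub] at hNC
    have : (N : ℝ) ≤ C / (δ - η) := by
      rw [le_div_iff₀ (sub_pos.2 hηδ)]; linarith
    exact_mod_cast this.trans (Nat.le_ceil _)
  set M := ⌈C / (δ - η)⌉₊
  have le_const (R : ℕ) : R * (δ - q * η) ≤ q * (M * η + C) := by
    have hcount : (R : ℝ) ≤ q * Nat.count (· ∈ S) R := by exact_mod_cast hS R
    have hmax : Nat.count (· ∈ S) R * δ ≤ (R + M : ℕ) * η + C := by
      refine (mul_count_le_sum_of_large_windows hg (hη.trans hηδ.le) window_le R).trans ?_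
      simpa only [sub_add_eq_add_sub, add_comm (1 : ℤ)] using hmean (1 - R) (R + M)
    push_cast at hmax
    nlinarith
  obtain ⟨R, hR⟩ := exists_nat_gt (q * (M * η + C) / (δ - q * η))
  rw [div_lt_iff₀ (sub_pos.2 hδ)] at hR
  exact (le_const R).not_gt hR

end MaximalInequality

section PowerMean

lemma norm_geom_sum_le_of_norm_eq_one {𝕜 : Type*} [NormedDivisionRing 𝕜] {u : 𝕜} (hu : ‖u‖ = 1)
    (hu1 : u ≠ 1) (N : ℕ) : ‖∑ n ∈ Finset.range N, u ^ n‖ ≤ 2 / ‖u - 1‖ := by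
  rw [geom_sum_eq hu1, norm_div]
  gcongr
  calc ‖u ^ N - 1‖ ≤ ‖u ^ N‖ + ‖(1 : 𝕜)‖ := norm_sub_le _ _
    _ = 2 := by rw [norm_pow, hu, one_pow, norm_one]; norm_num

variable {F : Finset ℂ}

lemma sum_norm_sq_sum_zpow (hF : ∀ c ∈ F, ‖c‖ = 1) (a : ℤ) (N : ℕ) :
    ((∑ n ∈ Finset.range N, ‖∑ c ∈ F, c ^ (a + n)‖ ^ 2 : ℝ) : ℂ) =
      ∑ c ∈ F, ∑ d ∈ F, (c / d) ^ a * ∑ n ∈ Finset.range N, (c / d) ^ n := by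
  have norm_sq_eq (j : ℤ) :
      ((‖∑ c ∈ F, c ^ j‖ ^ 2 : ℝ) : ℂ) = ∑ c ∈ F, ∑ d ∈ F, (c / d) ^ j := by
    rw [Complex.ofReal_pow, ← Complex.mul_conj', map_sum, Finset.sum_mul_sum]
    refine Finset.sum_congr rfl fun c _ => Finset.sum_congr rfl fun d hd => ?_
    rw [map_zpow₀, ← Complex.inv_eq_conj (hF d hd), div_zpow, inv_zpow, div_eq_mul_inv]
  have zpow_add_div (c d : ℂ) (hc : c ∈ F) (hd : d ∈ F) (n : ℕ) :
      (c / d) ^ (a + n) = (c / d) ^ a * (c / d) ^ n := by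
    have : c / d ≠ 0 := norm_ne_zero_iff.1 (by simp [hF c hc, hF d hd])
    rw [zpow_add₀ this, zpow_natCast]
  simp only [Complex.ofReal_sum, norm_sq_eq, Finset.mul_sum]
  rw [Finset.sum_comm]
  refine Finset.sum_congr rfl fun c hc => ?_
  rw [Finset.sum_comm]
  exact Finset.sum_congr rfl fun d hd => Finset.sum_congr rfl fun n _ => zpow_add_div c d hc hd n

/- The diagonal terms of the double sum on the right are `2 / 0 = 0`. -/
lemma sum_norm_sq_sum_zpow_le (hF : ∀ c ∈ F, ‖c‖ = 1) (a : ℤ) (N : ℕ) :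
    ∑ n ∈ Finset.range N, ‖∑ c ∈ F, c ^ (a + n)‖ ^ 2 ≤
      N * F.card + ∑ c ∈ F, ∑ d ∈ F, 2 / ‖c / d - 1‖ := by
  have norm_inner_le : ∀ c ∈ F, ∀ d ∈ F, ‖(c / d) ^ a * ∑ n ∈ Finset.range N, (c / d) ^ n‖ ≤
      (if c = d then (N : ℝ) else 0) + 2 / ‖c / d - 1‖ := by
    intro c hc d hd
    have hnorm : ‖c / d‖ = 1 := by rw [norm_div, hF c hc, hF d hd, div_one]
    have hd0 : d ≠ 0 := norm_ne_zero_iff.1 (by simp [hF d hd])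
    rw [norm_mul, norm_zpow, hnorm, one_zpow, one_mul]
    split_ifs with hcd
    · simp [hcd, div_self hd0]
    · rw [zero_add]
      exact norm_geom_sum_le_of_norm_eq_one hnorm (by rwa [ne_eq, div_eq_one_iff_eq hd0]) N
  calc ∑ n ∈ Finset.range N, ‖∑ c ∈ F, c ^ (a + n)‖ ^ 2
      = ‖((∑ n ∈ Finset.range N, ‖∑ c ∈ F, c ^ (a + n)‖ ^ 2 : ℝ) : ℂ)‖ :=
        (Complex.norm_of_nonneg (by positivity)).symm
    _ ≤ ∑ c ∈ F, ∑ d ∈ F, ((if c = d then (N : ℝ) else 0) + 2 / ‖c / d - 1‖) := by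
        rw [sum_norm_sq_sum_zpow hF]
        exact norm_sum_le_of_le _ fun c hc => norm_sum_le_of_le _ fun d hd =>
          norm_inner_le c hc d hd
    _ = N * F.card + ∑ c ∈ F, ∑ d ∈ F, 2 / ‖c / d - 1‖ := by
        simp [Finset.sum_add_distrib, mul_comm]

/-- The `j`-th Fourier coefficient of the uniform probability measure on the finite set `F`,
up to the sign of `j`. -/
noncomputable def powerMean (F : Finset ℂ) (j : ℤ) : ℂ :=
  (F.card : ℂ)⁻¹ * ∑ c ∈ F, c ^ j

lemma powerMean_zero (hF : F.Nonempty) : powerMean F 0 = 1 := by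
  have : (F.card : ℂ) ≠ 0 := by exact_mod_cast hF.card_ne_zero
  simp [powerMean, this]

lemma exists_forall_sum_norm_sq_powerMean_le (hF : ∀ c ∈ F, ‖c‖ = 1) :
    ∃ C : ℝ, ∀ (a : ℤ) (N : ℕ),
      ∑ n ∈ Finset.range N, ‖powerMean F (a + n)‖ ^ 2 ≤ N * (F.card : ℝ)⁻¹ + C := by
  refine ⟨(F.card : ℝ)⁻¹ ^ 2 * ∑ c ∈ F, ∑ d ∈ F, 2 / ‖c / d - 1‖, fun a N => ?_⟩
  calc ∑ n ∈ Finset.range N, ‖powerMean F (a + n)‖ ^ 2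
      = (F.card : ℝ)⁻¹ ^ 2 * ∑ n ∈ Finset.range N, ‖∑ c ∈ F, c ^ (a + n)‖ ^ 2 := by
        simp only [powerMean, norm_mul, norm_inv, Complex.norm_natCast, mul_pow, ← Finset.mul_sum]
    _ ≤ (F.card : ℝ)⁻¹ ^ 2 * (N * F.card + ∑ c ∈ F, ∑ d ∈ F, 2 / ‖c / d - 1‖) := by
        gcongr
        exact sum_norm_sq_sum_zpow_le hF a N
    _ = N * (F.card : ℝ)⁻¹ + (F.card : ℝ)⁻¹ ^ 2 * ∑ c ∈ F, ∑ d ∈ F, 2 / ‖c / d - 1‖ := by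
        field_simp

lemma HasInitialDensity.exists_mem_forall_sum_norm_powerMean_le {S : Set ℕ} {q : ℕ}
    (hS : HasInitialDensity S q) (hF : ∀ c ∈ F, ‖c‖ = 1) {ε : ℝ} (hε : 0 < ε)
    (hq : q / ε ^ 2 < F.card) :
    ∃ m ∈ S, ∀ N : ℕ, ∑ n ∈ Finset.range N, ‖powerMean F (n - m)‖ ≤ N * ε := by
  obtain ⟨C, hC⟩ := exists_forall_sum_norm_sq_powerMean_le hF
  have hcard : (0 : ℝ) < F.card := lt_of_le_of_lt (by positivity) hq
  have hqε : q * (F.card : ℝ)⁻¹ < ε ^ 2 := by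
    rwa [← div_eq_mul_inv, div_lt_comm₀ hcard (by positivity)]
  obtain ⟨m, hm, hsq⟩ := hS.exists_mem_forall_sum_le (g := fun j => ‖powerMean F j‖ ^ 2)
    (fun j => by positivity) (by positivity) hC hqε
  refine ⟨m, hm, fun N => le_of_sq_le_sq ?_ (by positivity)⟩
  calc (∑ n ∈ Finset.range N, ‖powerMean F (n - m)‖) ^ 2
      ≤ N * ∑ n ∈ Finset.range N, ‖powerMean F (n - m)‖ ^ 2 := by
        simpa using sq_sum_le_card_mul_sum_sq (s := Finset.range N)
          (f := fun n : ℕ => ‖powerMean F (n - m)‖)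
    _ ≤ N * (N * ε ^ 2) := by gcongr; exact hsq N
    _ = (N * ε) ^ 2 := by ring

end PowerMean

section OrbitAverages

variable {𝕜 X : Type*} [NormedField 𝕜] [SeminormedAddCommGroup X] [NormedSpace 𝕜 X]
  {T : X →L[𝕜] X} {y z : X} {ε δ : ℝ}

/-- All Cesàro means of the norms along the orbit of `y` are at most `ε`. The least such `ε` is a
norm in which the limit vector is built; it dominates the norm of `X`. -/
def OrbitAveragesLE (T : X →L[𝕜] X) (y : X) (ε : ℝ) : Prop :=
  ∀ N : ℕ, ∑ n ∈ Finset.range N, ‖(T ^ n) y‖ ≤ N * ε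

namespace OrbitAveragesLE

lemma zero (T : X →L[𝕜] X) (hε : 0 ≤ ε) : OrbitAveragesLE T 0 ε := fun N => by
  simpa only [map_zero, norm_zero, Finset.sum_const_zero] using by positivity

lemma mono (hy : OrbitAveragesLE T y ε) (hεδ : ε ≤ δ) : OrbitAveragesLE T y δ := fun N =>
  (hy N).trans (by gcongr)

lemma add (hy : OrbitAveragesLE T y ε) (hz : OrbitAveragesLE T z δ) :
    OrbitAveragesLE T (y + z) (ε + δ) := fun N => by
  calc ∑ n ∈ Finset.range N, ‖(T ^ n) (y + z)‖
      ≤ ∑ n ∈ Finset.range N, (‖(T ^ n) y‖ + ‖(T ^ n) z‖) :=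
        Finset.sum_le_sum fun n _ => by rw [map_add]; exact norm_add_le _ _
    _ = ∑ n ∈ Finset.range N, ‖(T ^ n) y‖ + ∑ n ∈ Finset.range N, ‖(T ^ n) z‖ :=
        Finset.sum_add_distrib
    _ ≤ N * ε + N * δ := add_le_add (hy N) (hz N)
    _ = N * (ε + δ) := by ring

lemma norm_le (hy : OrbitAveragesLE T y ε) : ‖y‖ ≤ ε := by
  simpa using hy 1

lemma isClosed_setOf (T : X →L[𝕜] X) (ε : ℝ) : IsClosed {y | OrbitAveragesLE T y ε} := by
  simp only [OrbitAveragesLE, Set.ofPred_forall]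
  exact isClosed_iInter fun N => isClosed_le (by fun_prop) continuous_const

open scoped Classical in
lemma count_mul_le (hy : OrbitAveragesLE T y ε) (r : ℝ) (N : ℕ) :
    Nat.count (· ∈ {n | r ≤ ‖(T ^ n) y‖}) N * r ≤ N * ε := by
  rw [Nat.count_eq_card_filter_range, ← nsmul_eq_mul]
  calc _ ≤ ∑ n ∈ Finset.range N with n ∈ {n | r ≤ ‖(T ^ n) y‖}, ‖(T ^ n) y‖ :=
        Finset.card_nsmul_le_sum _ _ _ fun n hn => (Finset.mem_filter.1 hn).2
    _ ≤ ∑ n ∈ Finset.range N, ‖(T ^ n) y‖ :=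
        Finset.sum_le_sum_of_subset_of_nonneg (Finset.filter_subset _ _) fun _ _ _ => norm_nonneg _
    _ ≤ N * ε := hy N

end OrbitAveragesLE

lemma exists_forall_orbitAveragesLE_sub [CompleteSpace X] {z : ℕ → X} {e : ℕ → ℝ}
    (hz : ∀ j, OrbitAveragesLE T (z (j + 1) - z j) (e j / 2)) (he : ∀ j, e (j + 1) ≤ e j / 2) :
    ∃ x, ∀ j, OrbitAveragesLE T (x - z j) (e j) := by
  have e_nonneg (j : ℕ) : 0 ≤ e j := by linarith [norm_nonneg (z (j + 1) - z j), (hz j).norm_le]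
  have e_le (j : ℕ) : e j ≤ e 0 / 2 ^ j := by
    induction j with
    | zero => simp
    | succ j ih =>
      calc e (j + 1) ≤ e j / 2 := he j
        _ ≤ e 0 / 2 ^ j / 2 := by gcongr
        _ = e 0 / 2 ^ (j + 1) := by rw [div_div, pow_succ]
  have telescope (k j : ℕ) : OrbitAveragesLE T (z (j + k) - z j) (e j) := by
    induction k generalizing j with
    | zero => simpa using OrbitAveragesLE.zero T (e_nonneg j)
    | succ k ih =>
      have := (ih (j + 1)).add (hz j)
      rw [sub_add_sub_cancel, Nat.add_right_comm, Nat.add_assoc] at this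
      exact this.mono (by linarith [he j])
  have cauchy : CauchySeq z := cauchySeq_of_le_geometric_two (C := e 0) fun j => by
    rw [dist_comm, dist_eq_norm]
    exact (hz j).norm_le.trans (by rw [div_right_comm]; gcongr; exact e_le j)
  obtain ⟨x, hx⟩ := cauchySeq_tendsto_of_complete cauchy
  refine ⟨x, fun j => (OrbitAveragesLE.isClosed_setOf T (e j)).mem_of_tendsto
    (hx.sub_const (z j)) ?_⟩
  filter_upwards [eventually_ge_atTop j] with i hji
  obtain ⟨k, rfl⟩ := Nat.exists_eq_add_of_le hji
  exact telescope k j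

/- A Baire category argument in the metric of `OrbitAveragesLE`: each `P j` contains a dense open
subset of `E`. -/
lemma exists_forall_of_orbitAveragesLE_stable [CompleteSpace X] {E : Set X} (hE : E.Nonempty)
    {P : ℕ → X → Prop} (hP : ∀ j, ∀ z ∈ E, ∀ ε > 0, ∃ z' ∈ E, OrbitAveragesLE T (z' - z) ε ∧
      ∃ ε' > 0, ∀ x, OrbitAveragesLE T (x - z') ε' → P j x) :
    ∃ x, ∀ j, P j x := by
  have exists_next (j : ℕ) (s : {s : X × ℝ // s.1 ∈ E ∧ 0 < s.2}) :
      ∃ s' : {s : X × ℝ // s.1 ∈ E ∧ 0 < s.2},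
        OrbitAveragesLE T (s'.1.1 - s.1.1) (s.1.2 / 2) ∧ s'.1.2 ≤ s.1.2 / 2 ∧
          ∀ x, OrbitAveragesLE T (x - s'.1.1) s'.1.2 → P j x := by
    obtain ⟨⟨z, e⟩, hz, he⟩ := s
    obtain ⟨z', hz', hclose, e', he', hstable⟩ := hP j z hz (e / 2) (half_pos he)
    exact ⟨⟨(z', min e' (e / 2)), hz', lt_min he' (half_pos he)⟩, hclose, min_le_right _ _,
      fun x hx => hstable x (hx.mono (min_le_left _ _))⟩
  choose next hclose hhalf hstable using exists_next
  obtain ⟨z₀, hz₀⟩ := hE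
  let s : ℕ → {s : X × ℝ // s.1 ∈ E ∧ 0 < s.2} := fun j =>
    Nat.rec ⟨(z₀, 1), hz₀, one_pos⟩ next j
  obtain ⟨x, hx⟩ := exists_forall_orbitAveragesLE_sub (z := fun j => (s j).1.1)
    (e := fun j => (s j).1.2) (fun j => hclose j (s j)) fun j => hhalf j (s j)
  exact ⟨x, fun j => hstable j (s j) x (hx (j + 1))⟩

end OrbitAverages

section UnimodularEigenvectors

lemma pow_apply_of_apply_eq_smul {R M : Type*} [CommSemiring R] [TopologicalSpace M]
    [AddCommMonoid M] [Module R M] {T : M →L[R] M} {x : M} {c : R} (hx : T x = c • x) (n : ℕ) :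
    (T ^ n) x = c ^ n • x := by
  induction n with
  | zero => simp
  | succ n ih => rw [pow_succ, mul_apply_eq_comp, hx, map_smul, ih, smul_smul, pow_succ']

variable {X : Type*} [NormedAddCommGroup X] [NormedSpace ℂ X] {T : X →L[ℂ] X} {w z : X}

/-- Eigenvectors of `T` for eigenvalues of modulus `1`, together with the zero vector. -/
def unimodularEigenvectors (T : X →L[ℂ] X) : Set X :=
  {x | ∃ c : ℂ, ‖c‖ = 1 ∧ T x = c • x}

/-- The linear span of the unimodular eigenvectors of `T`: the almost periodic vectors from which
frequently hypercyclic ones are built. -/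
abbrev unimodularSpan (T : X →L[ℂ] X) : Submodule ℂ X :=
  Submodule.span ℂ (unimodularEigenvectors T)

lemma pow_apply_mem_unimodularSpan (hz : z ∈ unimodularSpan T) (m : ℕ) :
    (T ^ m) z ∈ unimodularSpan T := by
  have span_le_comap : unimodularSpan T ≤ (unimodularSpan T).comap (T ^ m).toLinearMap := by
    refine Submodule.span_le.2 fun x hx => ?_
    obtain ⟨c, -, hcx⟩ := id hx
    rw [SetLike.mem_coe, Submodule.mem_comap, ContinuousLinearMap.coe_coe,
      pow_apply_of_apply_eq_smul hcx]
    exact Submodule.smul_mem _ _ (Submodule.subset_span hx)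
  exact span_le_comap hz

lemma exists_eq_sum_of_mem_unimodularSpan (hz : z ∈ unimodularSpan T) :
    ∃ (k : ℕ) (c : Fin k → ℂ) (v : Fin k → X),
      (∀ i, ‖c i‖ = 1) ∧ (∀ i, T (v i) = c i • v i) ∧ z = ∑ i, v i := by
  obtain ⟨k, a, x, rfl⟩ := Submodule.mem_span_set'.1 hz
  choose c hc hx using fun i => (x i).2
  exact ⟨k, c, fun i => a i • (x i : X), hc, fun i => by rw [map_smul, hx, smul_comm], rfl⟩

lemma norm_pow_sub_apply_sum_sub_le {ι : Type*} [Fintype ι] {c : ι → ℂ} {v : ι → X}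
    (hc : ∀ i, ‖c i‖ = 1) (hv : ∀ i, T (v i) = c i • v i) {m n : ℕ} (hmn : m ≤ n) :
    ‖(T ^ (n - m)) (∑ i, v i) - ∑ i, v i‖ ≤
      dist (fun i => c i ^ m) (fun i => c i ^ n) * ∑ i, ‖v i‖ := by
  have norm_pow_sub_one_le (i : ι) :
      ‖c i ^ (n - m) - 1‖ ≤ dist (fun i => c i ^ m) (fun i => c i ^ n) := by
    calc ‖c i ^ (n - m) - 1‖ = ‖c i ^ m * (c i ^ (n - m) - 1)‖ := by
          rw [norm_mul, norm_pow, hc, one_pow, one_mul]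
      _ = dist (c i ^ m) (c i ^ n) := by
          rw [mul_sub, ← pow_add, Nat.add_sub_cancel' hmn, mul_one, dist_comm, dist_eq_norm]
      _ ≤ _ := dist_le_pi_dist (fun i => c i ^ m) (fun i => c i ^ n) i
  calc ‖(T ^ (n - m)) (∑ i, v i) - ∑ i, v i‖ = ‖∑ i, (c i ^ (n - m) - 1) • v i‖ := by
        simp only [map_sum, pow_apply_of_apply_eq_smul (hv _), sub_smul, one_smul,
          Finset.sum_sub_distrib]
    _ ≤ ∑ i, dist (fun i => c i ^ m) (fun i => c i ^ n) * ‖v i‖ :=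
        norm_sum_le_of_le _ fun i _ => by rw [norm_smul]; gcongr; exact norm_pow_sub_one_le i
    _ = _ := (Finset.mul_sum _ _ _).symm

lemma exists_hasInitialDensity_returnTimes (hz : z ∈ unimodularSpan T) {r : ℝ} (hr : 0 < r) :
    ∃ q, HasInitialDensity {n | ‖(T ^ n) z - z‖ < r} q := by
  obtain ⟨k, c, v, hc, hv, rfl⟩ := exists_eq_sum_of_mem_unimodularSpan hz
  have powers_totallyBounded : TotallyBounded (Set.range fun n i => c i ^ n) := by
    refine (isCompact_closedBall (0 : Fin k → ℂ) 1).totallyBounded.subset ?_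
    rintro - ⟨n, rfl⟩
    rw [mem_closedBall_zero_iff, pi_norm_le_iff_of_nonneg zero_le_one]
    intro i
    rw [norm_pow, hc, one_pow]
  have norms_pos : 0 < ∑ i, ‖v i‖ + 1 := by positivity
  refine exists_hasInitialDensity_of_totallyBounded powers_totallyBounded (div_pos hr norms_pos)
    fun m n hmn hdist => ?_
  rw [lt_div_iff₀ norms_pos] at hdist
  calc ‖(T ^ (n - m)) (∑ i, v i) - ∑ i, v i‖
      ≤ dist (fun i => c i ^ m) (fun i => c i ^ n) * ∑ i, ‖v i‖ :=
        norm_pow_sub_apply_sum_sub_le hc hv hmn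
    _ ≤ dist (fun i => c i ^ m) (fun i => c i ^ n) * (∑ i, ‖v i‖ + 1) := by gcongr; linarith
    _ < r := hdist

lemma exists_forall_lowerDensity_pos_of_orbitAveragesLE (hz : z ∈ unimodularSpan T) {U : Set X}
    (hU : IsOpen U) {m : ℕ} (hm : (T ^ m) z ∈ U) :
    ∃ ε > 0, ∀ x, OrbitAveragesLE T (x - z) ε → 0 < lowerDensity {n | (T ^ n) x ∈ U} := by
  obtain ⟨r, hr, hball⟩ := Metric.isOpen_iff.1 hU _ hm
  obtain ⟨q, hq⟩ := exists_hasInitialDensity_returnTimes (pow_apply_mem_unimodularSpan hz m)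
    (half_pos hr)
  have hq0 : (0 : ℝ) < q := by exact_mod_cast hq.pos
  refine ⟨(2 * q : ℝ)⁻¹ * (r / 2), by positivity, fun x hx => ?_⟩
  refine hq.lowerDensity_pos_of_add_mem_union (m := m)
    (Q := {n | r / 2 ≤ ‖(T ^ n) (x - z)‖}) (fun n hn => ?_) fun N => ?_
  · refine or_iff_not_imp_right.2 fun hclose => hball ?_
    rw [Set.mem_ofPred_eq, not_le] at hclose
    have decomp : (T ^ (m + n)) x - (T ^ m) z =
        (T ^ (m + n)) (x - z) + ((T ^ n) ((T ^ m) z) - (T ^ m) z) := by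
      rw [map_sub, add_comm m n, pow_add, mul_apply_eq_comp, mul_apply_eq_comp]
      abel
    rw [mem_ball_iff_norm, decomp]
    exact (norm_add_le _ _).trans_lt ((add_lt_add hclose hn).trans_eq (add_halves r))
  · have markov := hx.count_mul_le (r / 2) N
    rw [← mul_assoc, mul_le_mul_iff_left₀ (half_pos hr), ← div_eq_mul_inv,
      le_div_iff₀ (by positivity), mul_comm] at markov
    exact_mod_cast markov

end UnimodularEigenvectors

section AccumulatedEigenvectors

lemma countable_setOf_exists_nhds_countable {X ι : Type*} [TopologicalSpace X]
    [SecondCountableTopology X] (E : ι → Set X) :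
    {c | ∃ x ∈ E c, ∃ u ∈ 𝓝 x, {d | (E d ∩ u).Nonempty}.Countable}.Countable := by
  have hB := TopologicalSpace.isBasis_countableBasis X
  have hcount : (⋃ V ∈ {V ∈ TopologicalSpace.countableBasis X |
      {d | (E d ∩ V).Nonempty}.Countable}, {d | (E d ∩ V).Nonempty}).Countable :=
    ((TopologicalSpace.countable_countableBasis X).mono (Set.sep_subset _ _)).biUnion
      fun V hV => hV.2
  refine hcount.mono ?_
  rintro c ⟨x, hxc, u, hu, hcountable⟩
  obtain ⟨V, hV, hxV, hVu⟩ := hB.mem_nhds_iff.1 hu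
  exact Set.mem_biUnion
    ⟨hV, hcountable.mono fun d hd => hd.mono (Set.inter_subset_inter_right _ hVu)⟩ ⟨x, hxc, hxV⟩

variable {X : Type*} [NormedAddCommGroup X] [NormedSpace ℂ X] {T : X →L[ℂ] X} {w : X}

/-- Unimodular eigenvectors (the zero vector included) all of whose neighbourhoods meet the
eigenspaces of infinitely many unimodular complex numbers. The zero vector lies in all eigenspaces,
so it always belongs to this set. -/
def accumulatedEigenvectors (T : X →L[ℂ] X) : Set X :=
  {w ∈ unimodularEigenvectors T | ∀ u ∈ 𝓝 w, {c : ℂ | ‖c‖ = 1 ∧ ∃ x ∈ u, T x = c • x}.Infinite}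

lemma smul_mem_accumulatedEigenvectors (hw : w ∈ accumulatedEigenvectors T) (a : ℂ) :
    a • w ∈ accumulatedEigenvectors T := by
  obtain ⟨⟨c, hc, hcw⟩, hinf⟩ := hw
  refine ⟨⟨c, hc, by rw [map_smul, hcw, smul_comm]⟩, fun u hu => ?_⟩
  refine (hinf _ ((continuous_const_smul a).continuousAt hu)).mono ?_
  rintro d ⟨hd, x, hxu, hdx⟩
  exact ⟨hd, a • x, hxu, by rw [map_smul, hdx, smul_comm]⟩

lemma PerfectlySpanning.dense_span_accumulatedEigenvectors [TopologicalSpace.SeparableSpace X]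
    (hT : PerfectlySpanning T) :
    Dense (Submodule.span ℂ (accumulatedEigenvectors T) : Set X) := by
  have : SecondCountableTopology X := UniformSpace.secondCountable_of_separable X
  obtain ⟨σ, -, hatom, hcircle, hspan⟩ := hT
  let E (c : ℂ) : Set X := {x | ‖c‖ = 1 ∧ T x = c • x}
  let C : Set ℂ := {c | ∃ x ∈ E c, ∃ u ∈ 𝓝 x, {d | (E d ∩ u).Nonempty}.Countable}
  have hC : C.Countable := countable_setOf_exists_nhds_countable E
  have : NullSingletonClass σ := ⟨hatom⟩
  have hcircle_meas : MeasurableSet {c : ℂ | ‖c‖ = 1} :=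
    (isClosed_eq continuous_norm continuous_const).measurableSet
  refine (hspan ({c | ‖c‖ = 1} \ C) Set.sdiff_subset (hcircle_meas.diff hC.measurableSet)
    (by rw [measure_sdiff_null (hC.measure_zero σ), hcircle])).mono
    (Submodule.span_mono (Set.iUnion₂_subset fun c ⟨hc, hcC⟩ x hcx => ⟨⟨c, hc, hcx⟩, ?_⟩))
  refine fun u hu hfin => hcC ⟨x, ⟨hc, hcx⟩, u, hu, hfin.countable.mono ?_⟩
  rintro d ⟨y, ⟨hd, hdy⟩, hyu⟩
  exact ⟨hd, y, hyu, hdy⟩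

end AccumulatedEigenvectors

section Steering

variable {X : Type*} [NormedAddCommGroup X] [NormedSpace ℂ X] {T : X →L[ℂ] X} {v w z : X}

/-- The average over `c ∈ F` of the eigenvectors `x c`, each rotated `m` steps backwards in time:
when the `x c` are close to `w`, so is the `m`-th iterate of this vector. -/
noncomputable def rotatedMean (F : Finset ℂ) (x : ℂ → X) (m : ℕ) : X :=
  (F.card : ℂ)⁻¹ • ∑ c ∈ F, c ^ (-(m : ℤ)) • x c

section RotatedMean

variable {F : Finset ℂ} {x : ℂ → X} {δ : ℝ}

lemma rotatedMean_mem_unimodularSpan (hF : ∀ c ∈ F, ‖c‖ = 1) (hx : ∀ c ∈ F, T (x c) = c • x c)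
    (m : ℕ) : rotatedMean F x m ∈ unimodularSpan T :=
  Submodule.smul_mem _ _ (Submodule.sum_mem _ fun c hc =>
    Submodule.smul_mem _ _ (Submodule.subset_span ⟨c, hF c hc, hx c hc⟩))

lemma norm_pow_apply_rotatedMean_sub_le (hF : ∀ c ∈ F, ‖c‖ = 1) (hx : ∀ c ∈ F, T (x c) = c • x c)
    (hxw : ∀ c ∈ F, ‖x c - w‖ ≤ δ) (hδ : 0 ≤ δ) (m n : ℕ) :
    ‖(T ^ n) (rotatedMean F x m) - powerMean F (n - m) • w‖ ≤ δ := by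
  have pow_apply_term : ∀ c ∈ F,
      (T ^ n) (c ^ (-(m : ℤ)) • x c) = c ^ (n - m : ℤ) • x c := fun c hc => by
    have hc0 : c ≠ 0 := norm_ne_zero_iff.1 (by simp [hF c hc])
    rw [map_smul, pow_apply_of_apply_eq_smul (hx c hc), smul_smul, ← zpow_natCast,
      ← zpow_add₀ hc0, neg_add_eq_sub]
  calc ‖(T ^ n) (rotatedMean F x m) - powerMean F (n - m) • w‖
      = ‖(F.card : ℂ)⁻¹ • ∑ c ∈ F, c ^ (n - m : ℤ) • (x c - w)‖ := by
        rw [rotatedMean, powerMean, map_smul, map_sum, Finset.sum_congr rfl pow_apply_term,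
          mul_smul, Finset.sum_smul, ← smul_sub, ← Finset.sum_sub_distrib]
        simp only [smul_sub]
    _ ≤ (F.card : ℝ)⁻¹ * ∑ _c ∈ F, δ := by
        rw [norm_smul, norm_inv, Complex.norm_natCast]
        gcongr
        refine norm_sum_le_of_le _ fun c hc => ?_
        rw [norm_smul, norm_zpow, hF c hc, one_zpow, one_mul]
        exact hxw c hc
    _ ≤ δ := by
        rw [Finset.sum_const, nsmul_eq_mul, ← mul_assoc]
        exact mul_le_of_le_one_left hδ inv_mul_le_one

lemma orbitAveragesLE_rotatedMean (hF : ∀ c ∈ F, ‖c‖ = 1) (hx : ∀ c ∈ F, T (x c) = c • x c)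
    (hxw : ∀ c ∈ F, ‖x c - w‖ ≤ δ) (hδ : 0 ≤ δ) {m : ℕ} {ε : ℝ}
    (hm : ∀ N : ℕ, ∑ n ∈ Finset.range N, ‖powerMean F (n - m)‖ ≤ N * ε) :
    OrbitAveragesLE T (rotatedMean F x m) (ε * ‖w‖ + δ) := fun N => by
  calc ∑ n ∈ Finset.range N, ‖(T ^ n) (rotatedMean F x m)‖
      ≤ ∑ n ∈ Finset.range N, (‖powerMean F (n - m)‖ * ‖w‖ + δ) := by
        refine Finset.sum_le_sum fun n _ => ?_
        rw [← norm_smul]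
        exact norm_le_norm_add_norm_sub' _ _ |>.trans
          (by gcongr; exact norm_pow_apply_rotatedMean_sub_le hF hx hxw hδ m n)
    _ = (∑ n ∈ Finset.range N, ‖powerMean F (n - m)‖) * ‖w‖ + N * δ := by
        rw [Finset.sum_add_distrib, ← Finset.sum_mul, Finset.sum_const, Finset.card_range,
          nsmul_eq_mul]
    _ ≤ N * ε * ‖w‖ + N * δ := by gcongr; exact hm N
    _ = N * (ε * ‖w‖ + δ) := by ring

end RotatedMean

/-- Every vector `z` in the span of the unimodular eigenvectors admits perturbations, inside the
span and with arbitrarily small orbit averages, some iterate of which comes arbitrarily close to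
`z + w`. -/
def Steerable (T : X →L[ℂ] X) (w : X) : Prop :=
  ∀ z ∈ unimodularSpan T, ∀ ε > 0, ∀ U : Set X, IsOpen U → z + w ∈ U →
    ∃ y ∈ unimodularSpan T, OrbitAveragesLE T y ε ∧ ∃ n : ℕ, (T ^ n) (z + y) ∈ U

lemma steerable_zero (T : X →L[ℂ] X) : Steerable T 0 := fun z _ ε hε U _ hzU =>
  ⟨0, zero_mem _, OrbitAveragesLE.zero T hε.le, 0, by simpa using hzU⟩

lemma steerable_of_mem_accumulatedEigenvectors (hw : w ∈ accumulatedEigenvectors T) :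
    Steerable T w := by
  intro z hz ε hε U hU hzU
  obtain ⟨r, hr, hball⟩ := Metric.isOpen_iff.1 hU _ hzU
  obtain ⟨q, hq⟩ := exists_hasInitialDensity_returnTimes hz (half_pos hr)
  set δ := min (ε / 2) (r / 2)
  have hδ : 0 < δ := lt_min (half_pos hε) (half_pos hr)
  set η := ε / 2 / (‖w‖ + 1)
  have hη : 0 < η := by positivity
  obtain ⟨k, hk⟩ := exists_nat_gt (q / η ^ 2)
  obtain ⟨F, hF, rfl⟩ := (hw.2 _ (Metric.closedBall_mem_nhds w hδ)).exists_subset_card_eq k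
  choose! hnorm x hxw hx using hF
  simp only [mem_closedBall_iff_norm] at hxw
  obtain ⟨m, hm, hmean⟩ := hq.exists_mem_forall_sum_norm_powerMean_le hnorm hη hk
  refine ⟨rotatedMean F x m, rotatedMean_mem_unimodularSpan hnorm hx m,
    (orbitAveragesLE_rotatedMean hnorm hx hxw hδ.le hmean).mono ?_, m, hball ?_⟩
  · have : η * ‖w‖ ≤ ε / 2 := by
      rw [div_mul_comm]
      exact mul_le_of_le_one_left (half_pos hε).le (div_le_one_of_le₀ (by linarith) (by positivity))
    linarith [min_le_left (ε / 2) (r / 2)]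
  · have hcard : (0 : ℝ) < F.card := lt_of_le_of_lt (by positivity) hk
    have hFne : F.Nonempty := Finset.card_pos.1 (by exact_mod_cast hcard)
    have hclose : ‖(T ^ m) (rotatedMean F x m) - w‖ ≤ r / 2 := by
      have := norm_pow_apply_rotatedMean_sub_le hnorm hx hxw hδ.le m m
      rw [sub_self, powerMean_zero hFne, one_smul] at this
      exact this.trans (min_le_right _ _)
    rw [mem_ball_iff_norm, map_add, add_sub_add_comm]
    exact (norm_add_le _ _).trans_lt ((add_lt_add_of_lt_of_le hm hclose).trans_eq (add_halves r))

/- After steering by `v`, reached at time `n`, one steers by the `n`-th preimage of `w`. -/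
lemma Steerable.add_of_mem_accumulatedEigenvectors (hv : Steerable T v)
    (hw : w ∈ accumulatedEigenvectors T) : Steerable T (w + v) := by
  intro z hz ε hε U hU hzU
  obtain ⟨c, hc, hcw⟩ := hw.1
  obtain ⟨y₁, hy₁, hy₁ε, n₁, hn₁⟩ := hv z hz (ε / 2) (half_pos hε) ((· + w) ⁻¹' U)
    (hU.preimage (continuous_add_const w)) (by rwa [Set.mem_preimage, add_assoc, add_comm v])
  have hc0 : c ^ n₁ ≠ 0 := norm_ne_zero_iff.1 (by simp [hc])
  have pow_apply_preimage : (T ^ n₁) ((c ^ n₁)⁻¹ • w) = w := by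
    rw [map_smul, pow_apply_of_apply_eq_smul hcw, inv_smul_smul₀ hc0]
  obtain ⟨y₂, hy₂, hy₂ε, n₂, hn₂⟩ :=
    steerable_of_mem_accumulatedEigenvectors (smul_mem_accumulatedEigenvectors hw (c ^ n₁)⁻¹)
      (z + y₁) (add_mem hz hy₁) (ε / 2) (half_pos hε) ((T ^ n₁) ⁻¹' U)
      (hU.preimage (T ^ n₁).continuous) (by rwa [Set.mem_preimage, map_add, pow_apply_preimage])
  refine ⟨y₁ + y₂, add_mem hy₁ hy₂, (hy₁ε.add hy₂ε).mono (add_halves ε).le, n₁ + n₂, ?_⟩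
  rwa [pow_add, mul_apply_eq_comp, ← add_assoc]

lemma steerable_of_mem_span (hw : w ∈ Submodule.span ℂ (accumulatedEigenvectors T)) :
    Steerable T w := by
  rw [← Submodule.mem_toAddSubmonoid, Submodule.span_eq_closure] at hw
  induction hw using AddSubmonoid.closure_induction_left with
  | zero => exact steerable_zero T
  | add_left _ hau v _ hv =>
    obtain ⟨a, -, u, hu, rfl⟩ := Set.mem_smul.1 hau
    exact hv.add_of_mem_accumulatedEigenvectors (smul_mem_accumulatedEigenvectors hu a)

lemma exists_pow_apply_add_mem_of_dense_span
    (hT : Dense (Submodule.span ℂ (accumulatedEigenvectors T) : Set X))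
    (hz : z ∈ unimodularSpan T) {ε : ℝ} (hε : 0 < ε) {U : Set X} (hU : IsOpen U)
    (hne : U.Nonempty) :
    ∃ y ∈ unimodularSpan T, OrbitAveragesLE T y ε ∧ ∃ n : ℕ, (T ^ n) (z + y) ∈ U := by
  obtain ⟨u, hu⟩ := hne
  obtain ⟨w, hwU, hw⟩ := hT.inter_open_nonempty ((z + ·) ⁻¹' U)
    (hU.preimage (continuous_const_add z)) ⟨u - z, by simpa using hu⟩
  exact steerable_of_mem_span hw z hz ε hε U hU hwU

end Steering

theorem frequentlyHypercyclic_of_dense_span_accumulatedEigenvectors {X : Type*}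
    [NormedAddCommGroup X] [NormedSpace ℂ X] [CompleteSpace X] [TopologicalSpace.SeparableSpace X]
    {T : X →L[ℂ] X} (hT : Dense (Submodule.span ℂ (accumulatedEigenvectors T) : Set X)) :
    FrequentlyHypercyclic T := by
  have : SecondCountableTopology X := UniformSpace.secondCountable_of_separable X
  obtain ⟨b, hb, hempty, hbasis⟩ := TopologicalSpace.exists_countable_basis X
  have hbne : b.Nonempty :=
    (hbasis.exists_subset_of_mem_open (Set.mem_univ (0 : X)) isOpen_univ).imp fun _ hB => hB.1
  obtain ⟨V, rfl⟩ := hb.exists_eq_range hbne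
  have hV (j : ℕ) : IsOpen (V j) ∧ (V j).Nonempty :=
    ⟨hbasis.isOpen ⟨j, rfl⟩, Set.nonempty_iff_ne_empty.2 fun h => hempty ⟨j, h⟩⟩
  obtain ⟨x, hx⟩ := exists_forall_of_orbitAveragesLE_stable (T := T)
    (E := unimodularSpan T) ⟨0, zero_mem _⟩
    (P := fun j x => 0 < lowerDensity {n | (T ^ n) x ∈ V j}) fun j z hz ε hε => by
      obtain ⟨y, hy, hyε, n, hn⟩ :=
        exists_pow_apply_add_mem_of_dense_span hT hz hε (hV j).1 (hV j).2
      have hzy : z + y ∈ unimodularSpan T := add_mem hz hy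
      exact ⟨z + y, hzy, by rwa [add_sub_cancel_left],
        exists_forall_lowerDensity_pos_of_orbitAveragesLE hzy (hV j).1 hn⟩
  refine ⟨x, fun U hU ⟨u, hu⟩ => ?_⟩
  obtain ⟨-, ⟨j, rfl⟩, -, hVU⟩ := hbasis.exists_subset_of_mem_open hu hU
  exact (hx j).trans_le (lowerDensity_mono fun n hn => hVU hn)

/-- If the unimodular eigenvectors of a bounded operator `T` on a complex separable
infinite-dimensional Banach space are perfectly spanning, then `T` is frequently
hypercyclic. -/
theorem perfectlySpanning_implies_frequentlyHypercyclic
    {X : Type*} [NormedAddCommGroup X] [NormedSpace ℂ X] [CompleteSpace X]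
    [TopologicalSpace.SeparableSpace X] (hdim : ¬ FiniteDimensional ℂ X)
    (T : X →L[ℂ] X) (hT : PerfectlySpanning T) :
    FrequentlyHypercyclic T := by
  exact frequentlyHypercyclic_of_dense_span_accumulatedEigenvectors
    hT.dense_span_accumulatedEigenvectors
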